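/- arXiv:2311.09391 — 4 statements merged into one kernel-verified Lean document; each statement's English description precedes it below -/
import Mathlib

section
/- Let f, g: (D_*, C_*) → (D'_*, C'_*) be morphisms of embedded complexes that are homotopic, i.e. f − g = dh + hd for some embedded map h of degree 1. Then f and g map Inf_n(D_*,C_*) into Inf_n(D'_*,C'_*), their restrictions f♭, g♭: Inf_*(D_*,C_*) → Inf_*(D'_*,C'_*) are chain homotopic via the restriction of h (which maps Inf_n(D_*,C_*) into Inf_{n+1}(D'_*,C'_*)), and consequently the induced maps on embedded homology agree: H_n(f) = H_n(g): H_n(D_*,C_*) → H_n(D'_*,C'_*) for every n ≥ 0. -/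
/-- The infimum chain complex of an embedded complex `(D_*, C_*)`:
`Inf_n(D_*, C_*) = {x ∈ D_n : d x ∈ D_{n-1}}` (with `Inf_0 = D_0`). -/
def infCpx {R : Type*} [CommRing R] {C : ℕ → Type*}
    [∀ n, AddCommGroup (C n)] [∀ n, Module R (C n)]
    (d : ∀ n, C (n + 1) →ₗ[R] C n) (D : ∀ n, Submodule R (C n)) :
    ∀ n, Submodule R (C n)
  | 0 => D 0
  | (n + 1) => D (n + 1) ⊓ Submodule.comap (d n) (D n)

/-- Let `f, g : (D_*, C_*) → (D'_*, C'_*)` be morphisms of embedded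
complexes which are homotopic via an embedded map `h` of degree `1` (so
`f - g = d'h + hd` and `h(D_n) ⊆ D'_{n+1}`).  Then `f` and `g` map
`Inf_n(D_*, C_*)` into `Inf_n(D'_*, C'_*)`, the degree-one map `h` maps
`Inf_n(D_*, C_*)` into `Inf_{n+1}(D'_*, C'_*)` (so the restrictions `f♭, g♭` are chain
homotopic via the restriction of `h`), and consequently the induced maps on embedded
homology agree: for every cycle `x` of `Inf_*(D_*, C_*)` the difference
`f x - g x` is the boundary of an element of `Inf_{*+1}(D'_*, C'_*)`, i.e.
`H_n(f) = H_n(g)` for every `n ≥ 0`. -/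
theorem statement1 {R : Type*} [CommRing R] {C C' : ℕ → Type*}
    [∀ n, AddCommGroup (C n)] [∀ n, Module R (C n)]
    [∀ n, AddCommGroup (C' n)] [∀ n, Module R (C' n)]
    (d : ∀ n, C (n + 1) →ₗ[R] C n) (d' : ∀ n, C' (n + 1) →ₗ[R] C' n)
    (hd : ∀ n (x : C (n + 2)), d n (d (n + 1) x) = 0)
    (hd' : ∀ n (x : C' (n + 2)), d' n (d' (n + 1) x) = 0)
    (D : ∀ n, Submodule R (C n)) (D' : ∀ n, Submodule R (C' n))
    (f g : ∀ n, C n →ₗ[R] C' n)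
    (hf : ∀ n (x : C (n + 1)), d' n (f (n + 1) x) = f n (d n x))
    (hg : ∀ n (x : C (n + 1)), d' n (g (n + 1) x) = g n (d n x))
    (hfD : ∀ n, ∀ x ∈ D n, f n x ∈ D' n)
    (hgD : ∀ n, ∀ x ∈ D n, g n x ∈ D' n)
    (h : ∀ n, C n →ₗ[R] C' (n + 1))
    (hhD : ∀ n, ∀ x ∈ D n, h n x ∈ D' (n + 1))
    (hhom0 : ∀ x : C 0, f 0 x - g 0 x = d' 0 (h 0 x))
    (hhom : ∀ n (x : C (n + 1)),
      f (n + 1) x - g (n + 1) x = d' (n + 1) (h (n + 1) x) + h n (d n x)) :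
    (∀ n, ∀ x ∈ infCpx d D n, f n x ∈ infCpx d' D' n) ∧
    (∀ n, ∀ x ∈ infCpx d D n, g n x ∈ infCpx d' D' n) ∧
    (∀ n, ∀ x ∈ infCpx d D n, h n x ∈ infCpx d' D' (n + 1)) ∧
    (∀ x ∈ infCpx d D 0, ∃ y ∈ infCpx d' D' 1, d' 0 y = f 0 x - g 0 x) ∧
    (∀ n, ∀ x ∈ infCpx d D (n + 1), d n x = 0 →
      ∃ y ∈ infCpx d' D' (n + 2), d' (n + 1) y = f (n + 1) x - g (n + 1) x) := by
  have key : ∀ n, ∀ x ∈ infCpx d D n, h n x ∈ infCpx d' D' (n + 1) := by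
    intro n x hx
    cases n with
    | zero =>
      refine ⟨hhD 0 x hx, ?_⟩
      change d' 0 (h 0 x) ∈ D' 0
      rw [← hhom0]
      exact (D' 0).sub_mem (hfD 0 x hx) (hgD 0 x hx)
    | succ n =>
      obtain ⟨hx1, hx2⟩ := hx
      refine ⟨hhD (n + 1) x hx1, ?_⟩
      change d' (n + 1) (h (n + 1) x) ∈ D' (n + 1)
      rw [eq_sub_of_add_eq (hhom n x).symm]
      exact (D' (n + 1)).sub_mem
        ((D' (n + 1)).sub_mem (hfD (n + 1) x hx1) (hgD (n + 1) x hx1)) (hhD n _ hx2)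
  have maps : ∀ k : ∀ n, C n →ₗ[R] C' n,
      (∀ n (x : C (n + 1)), d' n (k (n + 1) x) = k n (d n x)) →
      (∀ n, ∀ x ∈ D n, k n x ∈ D' n) →
      ∀ n, ∀ x ∈ infCpx d D n, k n x ∈ infCpx d' D' n := by
    intro k hk hkD n x hx
    cases n with
    | zero => exact hkD 0 x hx
    | succ n =>
      obtain ⟨hx1, hx2⟩ := hx
      refine ⟨hkD (n + 1) x hx1, ?_⟩
      change d' n (k (n + 1) x) ∈ D' n
      rw [hk]
      exact hkD n _ hx2
  refine ⟨maps f hf hfD, maps g hg hgD, key, ?_, ?_⟩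
  · intro x hx
    exact ⟨h 0 x, key 0 x hx, (hhom0 x).symm⟩
  · intro n x hx hx0
    refine ⟨h (n + 1) x, key (n + 1) x hx, ?_⟩
    rw [hhom n x, hx0, map_zero, add_zero]
end

section
/- Let H be a hypergraph on a finite vertex set V and let K be an abstract simplicial complex on V with H ⊆ K. Then H(P(ΔH), H) = H(P(K), H), where P(ΔH) and P(K) are the inclusion posets of simplices of ΔH and of K respectively, each graded by ρ(σ) = |σ| − 1 and marked by the subset H. In particular, the hypergraph construction on (P(K), H) does not depend on the choice of the simplicial complex K containing H. -/
section Hypergraph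

variable {V : Type*} [DecidableEq V]

/-- The simplicial closure `ΔH` of a hypergraph `H`: all nonempty subsets of hyperedges. -/
def clos (H : Set (Finset V)) : Set (Finset V) :=
  {τ | τ.Nonempty ∧ ∃ σ ∈ H, τ ⊆ σ}

/-- A nonempty strict chain `σ₀ ⊊ σ₁ ⊊ ⋯ ⊊ σₙ` of elements of `A`: an element of the
poset `N(P(A))` of chains of the poset `P(A)` of elements of `A` ordered by inclusion. -/
def IsChainIn (A : Set (Finset V)) (l : List (Finset V)) : Prop :=
  l ≠ [] ∧ l.Pairwise (· ⊂ ·) ∧ ∀ τ ∈ l, τ ∈ A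

/-- The order on chains: chains of the same length are compared componentwise. -/
def chainLE (l l' : List (Finset V)) : Prop := List.Forall₂ (· ⊆ ·) l l'

/-- The strict order on chains. -/
def chainLT (l l' : List (Finset V)) : Prop := chainLE l l' ∧ l ≠ l'

/-- Membership in `N(P(A), M)`: a chain of elements of `A` whose greatest entry is in `M`. -/
def memN (A M : Set (Finset V)) (l : List (Finset V)) : Prop :=
  IsChainIn A l ∧ ∃ h : l ≠ [], l.getLast h ∈ M

/-- The covering relation in the poset `N(P(A))` of chains. -/
def covN (A : Set (Finset V)) (l' l : List (Finset V)) : Prop :=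
  IsChainIn A l' ∧ IsChainIn A l ∧ chainLT l' l ∧
    ¬∃ u : List (Finset V), IsChainIn A u ∧ chainLT l' u ∧ chainLT u l

/-- `M`-successive elements: the minimal elements of `N(P(A), M)`. -/
def isSucc (A M : Set (Finset V)) (l : List (Finset V)) : Prop :=
  memN A M l ∧ ∀ l' : List (Finset V), memN A M l' → ¬ chainLT l' l

/-- The hypergraph construction `H(P(A), M)` on the marked poset `(P(A), M)`, defined
inductively: a chain belongs to it if it lies in `N(P(A), M)` and either is
`M`-successive or all chains covered by it belong to it. -/
inductive hypConIn (A M : Set (Finset V)) : List (Finset V) → Prop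
  | of_succ (l : List (Finset V)) (h : isSucc A M l) : hypConIn A M l
  | of_cov (l : List (Finset V)) (hm : memN A M l)
      (h : ∀ l' : List (Finset V), covN A l' l → hypConIn A M l') : hypConIn A M l

/-- An abstract simplicial complex on the vertex set `V`. -/
def IsComplex (K : Set (Finset V)) : Prop :=
  (∀ σ ∈ K, σ.Nonempty) ∧ ∀ σ ∈ K, ∀ τ : Finset V, τ.Nonempty → τ ⊆ σ → τ ∈ K

end Hypergraph

section Helpers

variable {V : Type*} [DecidableEq V]

theorem clos_sub {H K : Set (Finset V)} (hK : IsComplex K) (hHK : H ⊆ K) : clos H ⊆ K := by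
  rintro τ ⟨hτ, σ, hσ, hs⟩
  exact hK.2 σ (hHK hσ) τ hτ hs

theorem chain_up {H K : Set (Finset V)} (hK : IsComplex K) (hHK : H ⊆ K)
    {l : List (Finset V)} (h : IsChainIn (clos H) l) : IsChainIn K l :=
  ⟨h.1, h.2.1, fun τ hτ => clos_sub hK hHK (h.2.2 τ hτ)⟩

theorem forall_two_mem {l l' : List (Finset V)} (h : List.Forall₂ (· ⊆ ·) l l') :
    ∀ τ ∈ l, ∃ σ ∈ l', τ ⊆ σ := by
  induction h with
  | nil => simp
  | cons hab _ ih =>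
    intro τ hτ
    rcases List.mem_cons.1 hτ with rfl | hτ
    · exact ⟨_, List.mem_cons_self, hab⟩
    · obtain ⟨σ, hσ, hs⟩ := ih τ hτ
      exact ⟨σ, List.mem_cons_of_mem _ hσ, hs⟩

theorem chain_down {H K : Set (Finset V)} (hK : IsComplex K)
    {l l' : List (Finset V)} (h : IsChainIn K l) (hle : chainLE l l')
    (h' : IsChainIn (clos H) l') : IsChainIn (clos H) l := by
  refine ⟨h.1, h.2.1, fun τ hτ => ⟨hK.1 τ (h.2.2 τ hτ), ?_⟩⟩
  obtain ⟨σ, hσ, hs⟩ := forall_two_mem hle τ hτ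
  obtain ⟨_, ρ, hρ, hr⟩ := h'.2.2 σ hσ
  exact ⟨ρ, hρ, hs.trans hr⟩

theorem sub_getLast {l : List (Finset V)} (h : l.Pairwise (· ⊂ ·)) (hne : l ≠ []) :
    ∀ τ ∈ l, τ ⊆ l.getLast hne := by
  induction l with
  | nil => simp
  | cons a t ih =>
    intro τ hτ
    rw [List.pairwise_cons] at h
    by_cases ht : t = []
    · subst ht
      simp at hτ
      simp [hτ]
    · rw [List.getLast_cons ht]
      rcases List.mem_cons.1 hτ with rfl | hτ
      · exact (h.1 _ (List.getLast_mem ht)).subset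
      · exact ih h.2 ht τ hτ

theorem memN_iff {H K : Set (Finset V)} (hK : IsComplex K) (hHK : H ⊆ K)
    (l : List (Finset V)) : memN (clos H) H l ↔ memN K H l := by
  constructor
  · rintro ⟨h, h2⟩
    exact ⟨chain_up hK hHK h, h2⟩
  · rintro ⟨h, hne, h2⟩
    exact ⟨⟨h.1, h.2.1, fun τ hτ => ⟨hK.1 τ (h.2.2 τ hτ), _, h2,
      sub_getLast h.2.1 hne τ hτ⟩⟩, hne, h2⟩

theorem covN_iff {H K : Set (Finset V)} (hK : IsComplex K) (hHK : H ⊆ K)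
    {l : List (Finset V)} (hl : IsChainIn (clos H) l) (l' : List (Finset V)) :
    covN (clos H) l' l ↔ covN K l' l := by
  constructor
  · rintro ⟨h1, h2, h3, h4⟩
    refine ⟨chain_up hK hHK h1, chain_up hK hHK h2, h3, ?_⟩
    rintro ⟨u, hu, hu1, hu2⟩
    exact h4 ⟨u, chain_down hK hu hu2.1 hl, hu1, hu2⟩
  · rintro ⟨h1, h2, h3, h4⟩
    refine ⟨chain_down hK h1 h3.1 hl, hl, h3, ?_⟩
    rintro ⟨u, hu, hu1, hu2⟩
    exact h4 ⟨u, chain_up hK hHK hu, hu1, hu2⟩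

theorem isSucc_iff {H K : Set (Finset V)} (hK : IsComplex K) (hHK : H ⊆ K)
    (l : List (Finset V)) : isSucc (clos H) H l ↔ isSucc K H l := by
  simp only [isSucc, memN_iff hK hHK]

end Helpers

/-- Let `H` be a hypergraph on a finite vertex set `V` and `K` an abstract
simplicial complex on `V` with `H ⊆ K`.  Then `H(P(ΔH), H) = H(P(K), H)`: the hypergraph
construction does not depend on the choice of the simplicial complex `K` containing `H`. -/
theorem statement8 {V : Type*} [DecidableEq V] [Fintype V]
    (H K : Set (Finset V)) (hH : H.Nonempty) (hHne : ∀ σ ∈ H, σ.Nonempty)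
    (hK : IsComplex K) (hHK : H ⊆ K) :
    hypConIn (clos H) H = hypConIn K H := by
  funext l
  apply propext
  constructor
  · intro h
    induction h with
    | of_succ l h => exact .of_succ l ((isSucc_iff hK hHK l).1 h)
    | of_cov l hm _ ih =>
      exact .of_cov l ((memN_iff hK hHK l).1 hm)
        fun l' hc => ih l' ((covN_iff hK hHK hm.1 l').2 hc)
  · intro h
    induction h with
    | of_succ l h => exact .of_succ l ((isSucc_iff hK hHK l).2 h)
    | of_cov l hm _ ih =>
      have hm' := (memN_iff hK hHK l).2 hm
      exact .of_cov l hm' fun l' hc => ih l' ((covN_iff hK hHK hm'.1 l').1 hc)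
end

section
/- For every hypergraph H, the simplicial closure of its subdivision equals the subdivision of its simplicial closure: Δ(sd(H)) = sd(ΔH). -/
theorem aux_clos {V : Type*} [DecidableEq V] (H : Set (Finset V)) :
    clos (clos H) = clos H := by
  ext τ
  constructor
  · rintro ⟨h, σ, ⟨_, ρ, hρ, h2⟩, h3⟩
    exact ⟨h, ρ, hρ, h3.trans h2⟩
  · intro h
    exact ⟨h.1, τ, h, subset_rfl⟩

theorem aux_sum {V : Type*} [DecidableEq V] {l l' : List (Finset V)}
    (h : List.Forall₂ (· ⊆ ·) l l') :
    (l.map Finset.card).sum ≤ (l'.map Finset.card).sum ∧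
      ((l'.map Finset.card).sum ≤ (l.map Finset.card).sum → l = l') := by
  induction h with
  | nil => simp
  | @cons a b l l' hab _ ih =>
    have := Finset.card_le_card hab
    simp only [List.map_cons, List.sum_cons]
    refine ⟨by omega, fun h => ?_⟩
    rw [Finset.eq_of_subset_of_card_le hab (by omega), ih.2 (by omega)]

theorem aux_full {V : Type*} [DecidableEq V] (K : Set (Finset V)) (n : ℕ) :
    ∀ l : List (Finset V), (l.map Finset.card).sum = n → IsChainIn K l → hypConIn K K l := by
  induction n using Nat.strong_induction_on with
  | _ n ih =>
    intro l hn hl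
    refine hypConIn.of_cov l ⟨hl, hl.1, hl.2.2 _ (List.getLast_mem _)⟩ ?_
    intro l' hc
    have h := aux_sum hc.2.2.1.1
    refine ih _ ?_ l' rfl hc.1
    by_contra hlt
    exact hc.2.2.1.2 (h.2 (by omega))

theorem aux_mem {V : Type*} [DecidableEq V] {A M : Set (Finset V)} {l : List (Finset V)}
    (h : hypConIn A M l) : memN A M l := by
  cases h with
  | of_succ _ h => exact h.1
  | of_cov _ hm _ => exact hm

theorem aux_card {V : Type*} [DecidableEq V] {l : List (Finset V)}
    (h : l.Pairwise (· ⊂ ·)) (hne : ∀ τ ∈ l, τ.Nonempty) (i : ℕ) :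
    ∀ hi : i < l.length, i + 1 ≤ (l[i]).card := by
  induction i with
  | zero => intro hi; exact Finset.card_pos.2 (hne _ (List.getElem_mem hi))
  | succ i ih =>
    intro hi
    have h1 := ih (by omega)
    have h2 := Finset.card_lt_card (List.pairwise_iff_getElem.1 h i (i+1) (by omega) hi (by omega))
    omega

theorem aux_drop {V : Type*} [DecidableEq V] (σ : Finset V) (hσ : σ.Nonempty)
    (l : List (Finset V)) (h : l.Pairwise (· ⊂ ·)) (hs : ∀ τ ∈ l, τ ⊂ σ) :
    ∃ x ∈ σ, ∀ τ ∈ l, τ ⊆ σ.erase x := by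
  rcases List.eq_nil_or_concat' l with rfl | ⟨l0, t, rfl⟩
  · obtain ⟨x, hx⟩ := hσ
    exact ⟨x, hx, by simp⟩
  · obtain ⟨x, hx, hxt⟩ := Finset.exists_of_ssubset (hs t (by simp))
    refine ⟨x, hx, fun τ hτ => ?_⟩
    have h1 : τ ⊆ t := by
      rw [List.pairwise_append] at h
      rcases List.mem_append.1 hτ with h' | h'
      · exact (h.2.2 τ h' t (by simp)).subset
      · rw [List.mem_singleton.1 h']
    exact Finset.subset_erase.2 ⟨(hs τ hτ).subset, fun h' => hxt (h1 h')⟩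

theorem aux_flag {V : Type*} [DecidableEq V] (n : ℕ) :
    ∀ (σ : Finset V) (l : List (Finset V)), σ.card = n → l.Pairwise (· ⊂ ·) →
      (∀ τ ∈ l, τ.Nonempty) → (∀ τ ∈ l, τ ⊆ σ) →
      ∃ l' : List (Finset V), l'.Pairwise (· ⊂ ·) ∧ (∀ τ ∈ l', τ.Nonempty) ∧
        (∀ τ ∈ l', τ ⊆ σ) ∧ l'.length = n ∧ (∀ i (hi : i < l'.length), (l'[i]).card = i + 1) ∧
        l.Sublist l' := by
  induction n with
  | zero =>
    intro σ l hσ _ hne hs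
    have : l = [] := by
      rw [List.eq_nil_iff_forall_not_mem]
      intro τ hτ
      have h1 := Finset.card_pos.2 (hne τ hτ)
      have h2 := Finset.card_le_card (hs τ hτ)
      omega
    subst this
    exact ⟨[], by simp⟩
  | succ n ih =>
    intro σ l hσ hp hne hs
    have hσne : σ.Nonempty := Finset.card_pos.1 (by omega)
    obtain ⟨l0, hp0, hne0, hs0, hsub⟩ : ∃ l0 : List (Finset V), l0.Pairwise (· ⊂ ·) ∧
        (∀ τ ∈ l0, τ.Nonempty) ∧ (∀ τ ∈ l0, τ ⊂ σ) ∧ l.Sublist (l0 ++ [σ]) := by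
      rcases List.eq_nil_or_concat' l with rfl | ⟨l0, t, rfl⟩
      · exact ⟨[], by simp⟩
      · have hp' := List.pairwise_append.1 hp
        have ht : t ⊆ σ := hs t (by simp)
        by_cases hts : t = σ
        · subst hts
          exact ⟨l0, hp'.1, fun τ h => hne τ (by simp [h]),
            fun τ h => hp'.2.2 τ h t (by simp), List.Sublist.refl _⟩
        · have htss : t ⊂ σ := ht.ssubset_of_ne hts
          refine ⟨l0 ++ [t], hp, hne, fun τ h => ?_, List.sublist_append_left _ _⟩
          rcases List.mem_append.1 h with h' | h'
          · exact (hp'.2.2 τ h' t (by simp)).trans htss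
          · rw [List.mem_singleton.1 h']; exact htss
    obtain ⟨x, hx, hxs⟩ := aux_drop σ hσne l0 hp0 hs0
    obtain ⟨l1, a, b, c, d, e, f⟩ := ih (σ.erase x) l0
      (by rw [Finset.card_erase_of_mem hx]; omega) hp0 hne0 hxs
    refine ⟨l1 ++ [σ], ?_, ?_, ?_, by simp [d], ?_, hsub.trans (f.append (List.Sublist.refl _))⟩
    · refine List.pairwise_append.2 ⟨a, by simp, fun τ hτ ρ hρ => ?_⟩
      rw [List.mem_singleton.1 hρ]
      exact Finset.ssubset_of_subset_of_ssubset (c τ hτ) (Finset.erase_ssubset hx)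
    · intro τ hτ
      rcases List.mem_append.1 hτ with h' | h'
      · exact b τ h'
      · rw [List.mem_singleton.1 h']; exact hσne
    · intro τ hτ
      rcases List.mem_append.1 hτ with h' | h'
      · exact (c τ h').trans (Finset.erase_subset _ _)
      · rw [List.mem_singleton.1 h']
    · intro i hi
      rw [List.getElem_append]
      split
      · exact e i _
      · simp at hi ⊢
        omega

/-- For every hypergraph `H`, the simplicial closure of its subdivision
equals the subdivision of its simplicial closure: `Δ(sd(H)) = sd(ΔH)`.  Here
`sd(H) = H(P(ΔH), H)`, whose hyperedges are chains of simplices of `ΔH`; a chain `l`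
belongs to `Δ(sd(H))` iff it is a nonempty subset (equivalently, a nonempty sublist) of
some hyperedge of `sd(H)`, and `sd(ΔH) = H(P(Δ(ΔH)), ΔH)`. -/
theorem statement9 {V : Type*} [DecidableEq V] [Fintype V]
    (H : Set (Finset V)) (hH : H.Nonempty) (hHne : ∀ σ ∈ H, σ.Nonempty)
    (l : List (Finset V)) :
    (l ≠ [] ∧ ∃ l' : List (Finset V), hypConIn (clos H) H l' ∧ l.Sublist l') ↔
      hypConIn (clos (clos H)) (clos H) l := by
  rw [aux_clos]
  constructor
  · rintro ⟨hl, l', hl', hs⟩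
    obtain ⟨⟨_, h1, h2⟩, _⟩ := aux_mem hl'
    exact aux_full _ _ l rfl ⟨hl, h1.sublist hs, fun τ hτ => h2 τ (hs.subset hτ)⟩
  · intro h
    obtain ⟨⟨hl, h1, h2⟩, _, hlast⟩ := aux_mem h
    refine ⟨hl, ?_⟩
    obtain ⟨hne, σ, hσ, hsub⟩ := hlast
    have hall : ∀ τ ∈ l, τ ⊆ σ := by
      rcases List.eq_nil_or_concat' l with rfl | ⟨l0, t, rfl⟩
      · simp
      · simp only [List.getLast_append_singleton] at hsub
        intro τ hτ
        rcases List.mem_append.1 hτ with h' | h'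
        · exact ((List.pairwise_append.1 h1).2.2 τ h' t (by simp)).subset.trans hsub
        · rw [List.mem_singleton.1 h']; exact hsub
    obtain ⟨l', a, b, c, d, e, f⟩ := aux_flag σ.card σ l rfl h1 (fun τ hτ => (h2 τ hτ).1) hall
    refine ⟨l', hypConIn.of_succ _ ⟨⟨⟨?_, a, fun τ hτ => ⟨b τ hτ, σ, hσ, c τ hτ⟩⟩, ?_, ?_⟩, ?_⟩, f⟩
    · rintro rfl
      exact hl (List.sublist_nil.1 f)
    · rintro rfl
      exact hl (List.sublist_nil.1 f)
    · have hpos := Finset.card_pos.2 (hHne σ hσ)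
      have : l'.getLast (by rintro rfl; exact hl (List.sublist_nil.1 f)) = σ := by
        refine Finset.eq_of_subset_of_card_le (c _ (List.getLast_mem _)) ?_
        rw [List.getLast_eq_getElem, e]
        omega
      rw [this]; exact hσ
    · rintro l'' ⟨⟨_, h3, h4⟩, _⟩ ⟨h5, h6⟩
      apply h6
      obtain ⟨h7, h8⟩ := List.forall₂_iff_get.1 h5
      refine List.ext_getElem h7 fun i hi hi' => ?_
      refine Finset.eq_of_subset_of_card_le (h8 i hi hi') ?_
      rw [e]
      exact aux_card h3 (fun τ hτ => (h4 τ hτ).1) i hi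
end

section
/- Let H be a hypergraph, let σ ∈ H be a hyperedge with |σ| = n+1 (an n-dimensional simplex of ΔH), and let k_1,…,k_n be integers with 0 ≤ k_t ≤ n+1−t for t = 1,…,n. Then the chain Δ^σ_{k_1k_2⋯k_n} = (∂_{k_n}⋯∂_{k_1}σ)(∂_{k_{n−1}}⋯∂_{k_1}σ)⋯(∂_{k_1}σ)σ is an H-successive element of N(P(ΔH), H); in particular Δ^σ_{k_1k_2⋯k_n} ∈ sd(H). -/
section Faces

variable {V : Type*} [LinearOrder V]

/-- The `i`-th face map `∂ᵢ`: delete the `i`-th vertex of the ordered simplex `σ`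
(the vertices being listed in the order fixed on `V`). -/
def fc (σ : Finset V) (i : ℕ) : Finset V :=
  ((σ.sort (· ≤ ·)).eraseIdx i).toFinset

/-- The chain `Δ^σ_{k₁k₂⋯kₙ} = (∂_{kₙ}⋯∂_{k₁}σ)(∂_{kₙ₋₁}⋯∂_{k₁}σ)⋯(∂_{k₁}σ)σ`. -/
def deltaChain (σ : Finset V) (ks : List ℕ) : List (Finset V) :=
  (List.range (ks.length + 1)).reverse.map (fun t => (ks.take t).foldl fc σ)

end Faces

theorem fc_subset {V : Type*} [LinearOrder V] (σ : Finset V) (i : ℕ) : fc σ i ⊆ σ := by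
  intro x hx
  unfold fc at hx
  rw [List.mem_toFinset] at hx
  have := (List.eraseIdx_sublist _ _).subset hx
  simpa using this

theorem fc_card {V : Type*} [LinearOrder V] (σ : Finset V) (i : ℕ) (h : i < σ.card) :
    (fc σ i).card + 1 = σ.card := by
  unfold fc
  rw [List.toFinset_card_of_nodup, List.length_eraseIdx]
  · simp [h]; omega
  · exact (Finset.sort_nodup σ (· ≤ ·)).sublist (List.eraseIdx_sublist _ _)

theorem foldl_take_succ {V : Type*} [LinearOrder V] (σ : Finset V) (ks : List ℕ) (t : ℕ)
    (ht : t < ks.length) :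
    (ks.take (t+1)).foldl fc σ = fc ((ks.take t).foldl fc σ) (ks.getD t 0) := by
  rw [List.take_add_one, List.foldl_append]
  simp only [List.getElem?_eq_getElem ht, Option.toList_some, List.foldl_cons, List.foldl_nil,
    List.getD_eq_getElem _ _ ht]

theorem foldl_card {V : Type*} [LinearOrder V] (σ : Finset V) (ks : List ℕ) (n : ℕ)
    (hcard : σ.card = n + 1) (hlen : ks.length = n)
    (hks : ∀ i, i < n → ks.getD i 0 ≤ n - i) (t : ℕ) (ht : t ≤ n) :
    ((ks.take t).foldl fc σ).card + t = n + 1 := by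
  induction t with
  | zero => simpa using hcard
  | succ t ih =>
    have h1 := ih (by omega)
    have h2 := hks t (by omega)
    rw [foldl_take_succ σ ks t (by omega)]
    have h3 := fc_card ((ks.take t).foldl fc σ) (ks.getD t 0) (by omega)
    omega

theorem foldl_anti {V : Type*} [LinearOrder V] (σ : Finset V) (ks : List ℕ) (s d : ℕ)
    (ht : s + d ≤ ks.length) :
    (ks.take (s + d)).foldl fc σ ⊆ (ks.take s).foldl fc σ := by
  induction d with
  | zero => simp
  | succ d ih =>
    rw [← add_assoc, foldl_take_succ σ ks (s+d) (by omega)]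
    exact (fc_subset _ _).trans (ih (by omega))

theorem chain_card {V : Type*} (l : List (Finset V)) (hp : l.Pairwise (· ⊂ ·))
    (hne : ∀ τ ∈ l, τ.Nonempty) (i : ℕ) (hi : i < l.length) : i + 1 ≤ (l[i]).card := by
  induction i with
  | zero => exact (hne _ (List.getElem_mem hi)).card_pos
  | succ i ih =>
    have h1 := ih (by omega)
    have h2 := Finset.card_lt_card (List.pairwise_iff_getElem.1 hp i (i+1) (by omega) hi (by omega))
    omega

theorem delta_length {V : Type*} [LinearOrder V] (σ : Finset V) (ks : List ℕ) :
    (deltaChain σ ks).length = ks.length + 1 := by simp [deltaChain]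

theorem delta_get {V : Type*} [LinearOrder V] (σ : Finset V) (ks : List ℕ) (i : ℕ)
    (hi : i < (deltaChain σ ks).length) :
    (deltaChain σ ks)[i] = (ks.take (ks.length - i)).foldl fc σ := by
  simp [deltaChain]

theorem statement11 {V : Type*} [LinearOrder V] [Fintype V]
    (H : Set (Finset V)) (hH : H.Nonempty) (hHne : ∀ σ ∈ H, σ.Nonempty)
    (σ : Finset V) (hσ : σ ∈ H) (n : ℕ) (hcard : σ.card = n + 1)
    (ks : List ℕ) (hlen : ks.length = n)
    (hks : ∀ i, i < n → ks.getD i 0 ≤ n - i) :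
    isSucc (clos H) H (deltaChain σ ks) ∧ hypConIn (clos H) H (deltaChain σ ks) := by
  have key : isSucc (clos H) H (deltaChain σ ks) := by
    have hl := delta_length σ ks
    have hne : deltaChain σ ks ≠ [] := by
      intro h; rw [h] at hl; simp at hl
    have hc := foldl_card σ ks n hcard hlen hks
    refine ⟨⟨⟨hne, ?_, ?_⟩, hne, ?_⟩, ?_⟩
    · rw [List.pairwise_iff_getElem]
      intro i j hi hj hij
      rw [delta_get, delta_get]
      have h1 := foldl_anti σ ks (ks.length - j) (j - i) (by omega)
      rw [show ks.length - j + (j - i) = ks.length - i by omega] at h1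
      refine Finset.ssubset_iff_subset_ne.2 ⟨h1, fun he => ?_⟩
      have h2 := hc (ks.length - i) (by omega)
      have h3 := hc (ks.length - j) (by omega)
      rw [he] at h2
      omega
    · intro τ hτ
      obtain ⟨i, hi, rfl⟩ := List.getElem_of_mem hτ
      rw [delta_get]
      have h2 := hc (ks.length - i) (by omega)
      refine ⟨Finset.card_pos.1 (by omega), σ, hσ, ?_⟩
      have h1 := foldl_anti σ ks 0 (ks.length - i) (by omega)
      simpa using h1
    · rw [List.getLast_eq_getElem, delta_get, hl]
      simpa using hσ
    · rintro l' ⟨⟨_, hp, hA⟩, _⟩ ⟨hle, hneq⟩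
      apply hneq
      obtain ⟨hll, hget⟩ := List.forall₂_iff_get.1 hle
      refine List.ext_getElem hll ?_
      intro i hi hi'
      have h1 := hget i hi hi'
      simp only [List.get_eq_getElem] at h1
      refine Finset.eq_of_subset_of_card_le h1 ?_
      have h2 := chain_card l' hp (fun τ h => (hA τ h).1) i hi
      rw [delta_get]
      have h3 := hc (ks.length - i) (by omega)
      omega
  exact ⟨key, .of_succ _ key⟩
end
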